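/- arXiv:2311.06065 — 2 statements merged into one kernel-verified Lean document; each statement's English description precedes it below -/
import Mathlib

section
/- Let e ∈ C[x] be nonzero, and let M, F, G ∈ C[x]^{r×r} be invertible matrices over C(x) satisfying σ_x((1/e)M)·F = G·(1/e)M, where the gcd of all entries of M together with e is 1. If p is an irreducible factor of e, then there exists an integer m ≥ 1 such that σ_x^m(p) divides det(F), and there exists an integer n ≥ 0 such that σ_x^{-n}(p) divides det(G). -/
/-!
Write `p_k` for the shift of `p` by `k`. Since `p_k ∣ e` forces every root `α` of `p` to give a root
`α - k` of `e`, only finitely many `p_k` divide the nonzero polynomial `e`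
(`finite_shift1_dvd`, the place where characteristic zero is used).

Let `k ≥ 0` be maximal with `p_k ∣ e`. Multiplying the compatibility relation on the right by the
adjugate of `F` gives `e · det F · σ(M) = σ(e) · G M adj(F)`. The prime `p_{k+1}` divides `σ(e)` but
not `e`; if it did not divide `det F` it would divide `σ(M)`, so `p_k` would divide both `e` and all
entries of `M`, contrary to the coprimality assumption. Symmetrically, let `k ≤ 0` be minimal with
`p_k ∣ e` and multiply on the left by the adjugate of `G`: `p_k` divides `e` but not `σ(e)`, so it
divides `det G` or all entries of `M`, and the latter is excluded.
-/

open Polynomial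

/-- The shift automorphism of `K[x]` sending `x ↦ x + k`. -/
noncomputable def shift1 (K : Type*) [Field K] [CharZero K] (k : ℤ) :
    Polynomial K →ₐ[K] Polynomial K :=
  aeval (X + Polynomial.C (k : K))

theorem shift1_shift1 (K : Type*) [Field K] [CharZero K] (k l : ℤ) (f : Polynomial K) :
    shift1 K k (shift1 K l f) = shift1 K (k + l) f := by
  have h : (shift1 K k).comp (shift1 K l) = shift1 K (k + l) := by
    apply Polynomial.algHom_ext
    simp [shift1]
    ring
  exact DFunLike.congr_fun h f

theorem shift1_zero (K : Type*) [Field K] [CharZero K] (f : Polynomial K) :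
    shift1 K 0 f = f := by
  simp [shift1]

theorem shift1_dvd_iff (K : Type*) [Field K] [CharZero K] (k l : ℤ) (f g : Polynomial K) :
    shift1 K (k + l) f ∣ shift1 K k g ↔ shift1 K l f ∣ g := by
  constructor
  · intro h
    have := map_dvd (shift1 K (-k)) h
    simpa [shift1_shift1, shift1_zero] using this
  · intro h
    have := map_dvd (shift1 K k) h
    simpa [shift1_shift1] using this

theorem irreducible_shift1 (K : Type*) [Field K] [CharZero K] (k : ℤ) {p : Polynomial K}
    (hp : Irreducible p) : Irreducible (shift1 K k p) := by
  let E : Polynomial K ≃ₐ[K] Polynomial K :=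
    AlgEquiv.ofAlgHom (shift1 K k) (shift1 K (-k))
      (by ext1; simp [shift1_shift1, shift1_zero])
      (by ext1; simp [shift1_shift1, shift1_zero])
  exact (MulEquiv.irreducible_iff E).2 hp

/-- Only finitely many shifts of an irreducible polynomial divide a given nonzero polynomial:
the shift by `k` moves a root `α` of `p` to `α - k`, and these are distinct in
characteristic zero. -/
theorem finite_shift1_dvd (K : Type*) [Field K] [CharZero K] {e p : Polynomial K} (he : e ≠ 0)
    (hp : Irreducible p) : {k : ℤ | shift1 K k p ∣ e}.Finite := by
  have : CharZero (AlgebraicClosure K) :=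
    charZero_of_injective_algebraMap (algebraMap K (AlgebraicClosure K)).injective
  obtain ⟨α, hα⟩ := IsAlgClosed.exists_aeval_eq_zero (AlgebraicClosure K) p
    (Polynomial.degree_pos_of_irreducible hp).ne'
  refine Set.Finite.of_injOn (f := fun k : ℤ => α - (k : AlgebraicClosure K))
    (t := e.rootSet (AlgebraicClosure K)) ?_ ?_ (Polynomial.rootSet_finite _ _)
  · rintro k ⟨c, hc⟩
    rw [Polynomial.mem_rootSet]
    refine ⟨he, ?_⟩
    have : aeval (α - (k : AlgebraicClosure K)) (shift1 K k p) = 0 := by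
      rw [shift1, ← Polynomial.comp_eq_aeval, Polynomial.aeval_comp]
      simpa using hα
    rw [hc, map_mul, this, zero_mul]
  · intro k _ l _ h
    simpa using h

/-- Let `e ∈ K[x]` be nonzero and `M, F, G` matrices over `K[x]`, invertible over `K(x)`,
with `σ_x((1/e)M)·F = G·(1/e)M` (written denominator-free as
`e • (σ_x(M) * F) = σ_x(e) • (G * M)`), where the gcd of all entries of `M` together with
`e` is `1`.  If `p` is an irreducible factor of `e`, then `σ_x^m(p) ∣ det F` for some
`m ≥ 1` and `σ_x^{-n}(p) ∣ det G` for some `n ≥ 0`. -/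
theorem division_lemma_factor_of_e (K : Type*) [Field K] [CharZero K] (r : ℕ)
    (e : Polynomial K) (he : e ≠ 0)
    (M F G : Matrix (Fin r) (Fin r) (Polynomial K))
    (hM : M.det ≠ 0) (hF : F.det ≠ 0) (hG : G.det ≠ 0)
    (hcompat : e • ((M.map (shift1 K 1)) * F) = (shift1 K 1 e) • (G * M))
    (hgcd : ∀ q : Polynomial K, Irreducible q → q ∣ e → ¬ ∀ i j, q ∣ M i j)
    (p : Polynomial K) (hp : Irreducible p) (hpe : p ∣ e) :
    (∃ m : ℤ, 1 ≤ m ∧ shift1 K m p ∣ F.det) ∧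
    (∃ n : ℤ, 0 ≤ n ∧ shift1 K (-n) p ∣ G.det) := by
  have hfin := finite_shift1_dvd K he hp
  have h0 : (0 : ℤ) ∈ {k : ℤ | shift1 K k p ∣ e} := by simpa [shift1_zero] using hpe
  constructor
  · obtain ⟨k, hk, hmax⟩ := Set.exists_max_image _ id hfin ⟨0, h0⟩
    simp only [Set.mem_ofPred_eq, id] at hk hmax
    have hk0 : 0 ≤ k := hmax 0 h0
    refine ⟨1 + k, by omega, ?_⟩
    have hq := (irreducible_shift1 K (1 + k) hp).prime
    have hqe : ¬ shift1 K (1 + k) p ∣ e := fun h => by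
      have := hmax _ h
      omega
    have hqs : shift1 K (1 + k) p ∣ shift1 K 1 e := (shift1_dvd_iff K 1 k p e).2 hk
    by_contra hdet
    have key : e • (F.det • M.map (shift1 K 1)) = shift1 K 1 e • (G * M * F.adjugate) := by
      have h := congrArg (· * F.adjugate) hcompat
      simpa [Matrix.mul_assoc, Matrix.mul_adjugate] using h
    refine hgcd _ (irreducible_shift1 K k hp) hk fun i j => ?_
    have hij := congrFun (congrFun key i) j
    simp only [Matrix.smul_apply, smul_eq_mul, Matrix.map_apply] at hij
    have hd : shift1 K (1 + k) p ∣ e * (F.det * shift1 K 1 (M i j)) :=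
      hij ▸ hqs.mul_right _
    exact (shift1_dvd_iff K 1 k p _).1
      (((hq.dvd_or_dvd hd).resolve_left hqe |> hq.dvd_or_dvd).resolve_left hdet)
  · obtain ⟨k, hk, hmin⟩ := Set.exists_min_image _ id hfin ⟨0, h0⟩
    simp only [Set.mem_ofPred_eq, id] at hk hmin
    have hk0 : k ≤ 0 := hmin 0 h0
    refine ⟨-k, by omega, ?_⟩
    rw [neg_neg]
    have hq := (irreducible_shift1 K k hp).prime
    have hqs : ¬ shift1 K k p ∣ shift1 K 1 e := fun h => by
      have h' : shift1 K (k - 1) p ∣ e := by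
        rw [← shift1_dvd_iff K 1 (k - 1)]
        simpa using h
      have := hmin _ h'
      omega
    by_contra hdet
    have key : e • (G.adjugate * (M.map (shift1 K 1) * F)) = shift1 K 1 e • (G.det • M) := by
      have h := congrArg (G.adjugate * ·) hcompat
      simpa [← Matrix.mul_assoc, Matrix.adjugate_mul] using h
    refine hgcd _ (irreducible_shift1 K k hp) hk fun i j => ?_
    have hij := congrFun (congrFun key i) j
    simp only [Matrix.smul_apply, smul_eq_mul] at hij
    have hd : shift1 K k p ∣ shift1 K 1 e * (G.det * M i j) := hij ▸ hk.mul_right _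
    exact ((hq.dvd_or_dvd hd).resolve_left hqs |> hq.dvd_or_dvd).resolve_left hdet
end

section
/- Let e, e_t ∈ C[t,x] and M, M_t ∈ C[t,x]^{r×r} be invertible over C(t,x) satisfying the compatibility condition σ_t((1/e)M)·(1/e_t)M_t = σ_x((1/e_t)M_t)·(1/e)M, where the gcd of all entries of M (resp. M_t) with e (resp. e_t) is 1. If p ∈ C[t,x] is an irreducible factor of e·det(M) with deg_t(p) ≠ 0, then there exist integers i > 0 and j ∈ ℤ such that σ_t^i σ_x^j(p) divides e_t·det(M_t). -/
/-!
Write `A = e⁻¹ M`, `B = e_t⁻¹ M_t`, and call an irreducible `q` bad for `A` when `q ∣ e * det M`.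
Since the entries of `M` share no irreducible factor of `e`, this means that `A` is not an
invertible matrix over the local ring of `K[t,x]` at `q`.

The compatibility condition reads `σ_t(A) = σ_x(B) A B⁻¹`. If `p` is bad for `A`, then `σ_t p` is
bad for `σ_t(A)`, hence for one of `A`, `B`, `σ_x(B)`. Were the conclusion false, `σ_t p` would be
bad neither for `B` nor for `σ_x(B)`, so it would be bad for `A`; this is `bad_shift_of_good`, in
denominator-free form. By induction every `σ_t^n p` would divide `e * det M`. As `deg_t p ≠ 0`,
this is impossible (`exists_shift_not_dvd`): a root `α` of `p` in an algebraic closure of `K(x)`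
would give the infinitely many roots `α - n` of `e * det M`, viewed as a polynomial in `t`.
-/

open MvPolynomial

/-- The shift automorphism of `K[t,x]` sending `t ↦ t + a`, `x ↦ x + b`
(variable `0` is `t`, variable `1` is `x`). -/
noncomputable def shift2 (K : Type*) [Field K] [CharZero K] (a b : ℤ) :
    MvPolynomial (Fin 2) K →ₐ[K] MvPolynomial (Fin 2) K :=
  aeval (fun i => X i + MvPolynomial.C (if i = 0 then (a : K) else (b : K)))

section Shift

variable {K : Type*} [Field K] [CharZero K]

lemma shift2_shift2 (a b c d : ℤ) (p : MvPolynomial (Fin 2) K) :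
    shift2 K a b (shift2 K c d p) = shift2 K (a + c) (b + d) p := by
  have h : (shift2 K a b).comp (shift2 K c d) = shift2 K (a + c) (b + d) := by
    apply MvPolynomial.algHom_ext
    intro i
    fin_cases i <;> simp [shift2, add_assoc]
  exact DFunLike.congr_fun h p

lemma shift2_zero (p : MvPolynomial (Fin 2) K) : shift2 K 0 0 p = p := by
  have h : shift2 K 0 0 = AlgHom.id K _ := by
    apply MvPolynomial.algHom_ext
    intro i
    fin_cases i <;> simp [shift2]
  exact DFunLike.congr_fun h p

/-- The shift `shift2 K a b` as an automorphism, with inverse `shift2 K (-a) (-b)`. -/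
noncomputable def shiftEquiv (K : Type*) [Field K] [CharZero K] (a b : ℤ) :
    MvPolynomial (Fin 2) K ≃ₐ[K] MvPolynomial (Fin 2) K :=
  AlgEquiv.ofAlgHom (shift2 K a b) (shift2 K (-a) (-b))
    (by ext1 i; simp [shift2_shift2, shift2_zero])
    (by ext1 i; simp [shift2_shift2, shift2_zero])

lemma shift2_irreducible {a b : ℤ} {p : MvPolynomial (Fin 2) K} (hp : Irreducible p) :
    Irreducible (shift2 K a b p) :=
  (MulEquiv.irreducible_iff (shiftEquiv K a b)).2 hp

lemma shift2_dvd_shift2 {a b : ℤ} {p q : MvPolynomial (Fin 2) K} :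
    shift2 K a b p ∣ shift2 K a b q ↔ p ∣ q :=
  map_dvd_iff (shiftEquiv K a b)

/-- A polynomial of positive degree in `t` has infinitely many non-associated `t`-shifts, so they
cannot all divide a fixed nonzero polynomial. -/
lemma exists_shift_not_dvd {p f : MvPolynomial (Fin 2) K} (hpt : degreeOf 0 p ≠ 0) (hf : f ≠ 0) :
    ∃ n : ℕ, ¬ shift2 K n 0 p ∣ f := by
  by_contra! hall
  let R := MvPolynomial (Fin 1) K
  let L := AlgebraicClosure (FractionRing R)
  have hinj : Function.Injective (algebraMap R L) := by
    rw [IsScalarTower.algebraMap_eq R (FractionRing R) L]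
    exact (algebraMap (FractionRing R) L).injective.comp (IsFractionRing.injective R _)
  have : CharZero L := charZero_of_injective_algebraMap hinj
  let ev : L → MvPolynomial (Fin 2) K →+* L := fun y =>
    (Polynomial.eval₂RingHom (algebraMap R L) y).comp (finSuccEquiv K 1 : _ →+* _)
  have hev : ∀ y q, ev y q = ((finSuccEquiv K 1 q).map (algebraMap R L)).eval y := by
    intro y q
    simp [ev, Polynomial.eval_map]
  have hev_shift : ∀ (y : L) (n : ℕ) q, ev y (shift2 K n 0 q) = ev (y + n) q := by
    intro y n q
    have h : (ev y).comp (shift2 K n 0 : _ →+* _) = ev (y + n) := by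
      apply MvPolynomial.ringHom_ext
      · intro c
        simp [ev, shift2, MvPolynomial.algebraMap_eq, finSuccEquiv_apply]
      · intro i
        fin_cases i
        · simp [ev, shift2, finSuccEquiv_apply]
        · have h1 : finSuccEquiv K 1 (X 1) = Polynomial.C (X 0) := finSuccEquiv_X_succ (j := 0)
          simp [ev, shift2, h1]
    exact DFunLike.congr_fun h q
  obtain ⟨α, hα⟩ : ∃ α : L, ev α p = 0 := by
    obtain ⟨α, hα⟩ := IsAlgClosed.exists_root ((finSuccEquiv K 1 p).map (algebraMap R L)) (by
      rw [Polynomial.degree_map_eq_of_injective hinj]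
      intro h
      exact hpt (by rw [← natDegree_finSuccEquiv]; exact Polynomial.natDegree_eq_of_degree_eq_some h))
    exact ⟨α, by rw [hev]; exact hα⟩
  have hroot : ∀ n : ℕ, ((finSuccEquiv K 1 f).map (algebraMap R L)).IsRoot (α - n) := by
    intro n
    have h := map_dvd (ev (α - n)) (hall n)
    rw [hev_shift, sub_add_cancel, hα, zero_dvd_iff, hev] at h
    exact h
  have hF : (finSuccEquiv K 1 f).map (algebraMap R L) ≠ 0 := by
    rw [Ne, Polynomial.map_eq_zero_iff hinj]
    simpa using hf
  refine hF (Polynomial.eq_zero_of_infinite_isRoot _ ?_)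
  refine Set.infinite_of_injective_forall_mem (f := fun n : ℕ => α - n) ?_ hroot
  intro m n h
  simpa using h

/-- If `p` is bad for `A = e⁻¹ M` and `σ_t p` is good for `B = e_t⁻¹ M_t` and for `σ_x(B)`, then
`σ_t p` is bad for `A`. -/
lemma bad_shift_of_good {r : ℕ} {e et : MvPolynomial (Fin 2) K}
    {M Mt : Matrix (Fin r) (Fin r) (MvPolynomial (Fin 2) K)}
    (hcompat : (shift2 K 0 1 et * e) • ((M.map (shift2 K 1 0)) * Mt)
             = (shift2 K 1 0 e * et) • ((Mt.map (shift2 K 0 1)) * M))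
    (hgcdM : ∀ q : MvPolynomial (Fin 2) K, Irreducible q → q ∣ e → ¬ ∀ i j, q ∣ M i j)
    {p : MvPolynomial (Fin 2) K} (hp : Irreducible p) (hpdvd : p ∣ e * M.det)
    (h0 : ¬ shift2 K 1 0 p ∣ et * Mt.det) (h1 : ¬ shift2 K 1 (-1) p ∣ et * Mt.det) :
    shift2 K 1 0 p ∣ e * M.det := by
  have hq : Prime (shift2 K 1 0 p) := (shift2_irreducible hp).prime
  have h1' : ¬ shift2 K 1 0 p ∣ shift2 K 0 1 (et * Mt.det) := by
    rwa [← shift2_dvd_shift2 (a := 0) (b := 1), shift2_shift2] at h1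
  have hdet : ∀ (a b : ℤ) (N : Matrix (Fin r) (Fin r) (MvPolynomial (Fin 2) K)),
      (N.map (shift2 K a b)).det = shift2 K a b N.det :=
    fun a b N => ((shift2 K a b).map_det N).symm
  rw [map_mul] at h1'
  simp only [hq.dvd_mul, not_or] at h0 h1' ⊢
  by_contra! hbad
  by_cases hpe : p ∣ e
  · -- Cancelling `M_t` by its adjugate shows that `σ_t p` divides every entry of `σ_t(M)`.
    refine hgcdM p hp hpe fun i j => ?_
    have hadj := congrArg (fun N => (N * Mt.adjugate) i j) hcompat
    simp only [Matrix.smul_mul, Matrix.mul_assoc, Matrix.mul_adjugate, Matrix.mul_smul,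
      Matrix.mul_one, Matrix.smul_apply, smul_eq_mul, Matrix.map_apply] at hadj
    have hd : shift2 K 1 0 p ∣
        shift2 K 0 1 et * e * (Mt.det * shift2 K 1 0 (M i j)) := by
      rw [hadj, mul_assoc]
      exact (shift2_dvd_shift2.2 hpe).mul_right _
    simp only [hq.dvd_mul] at hd
    rw [← shift2_dvd_shift2 (a := 1) (b := 0)]
    tauto
  · -- Here `σ_t p` divides `σ_t(det M)`, and determinants suffice.
    have hpM : shift2 K 1 0 p ∣ shift2 K 1 0 M.det :=
      shift2_dvd_shift2.2 ((hp.prime.dvd_or_dvd hpdvd).resolve_left hpe)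
    have hpe' : ¬ shift2 K 1 0 p ∣ shift2 K 1 0 e := by rwa [shift2_dvd_shift2]
    have hD := congrArg Matrix.det hcompat
    simp only [Matrix.det_smul, Matrix.det_mul, hdet] at hD
    have hd : shift2 K 1 0 p ∣ (shift2 K 1 0 e * et) ^ Fintype.card (Fin r) *
        (shift2 K 0 1 Mt.det * M.det) := by
      rw [← hD]
      exact Dvd.dvd.mul_left (Dvd.dvd.mul_right hpM Mt.det) _
    rcases hq.dvd_or_dvd hd with hd | hd
    · have hd := hq.dvd_of_dvd_pow hd
      exact (hq.dvd_or_dvd hd).elim hpe' h0.1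
    · exact (hq.dvd_or_dvd hd).elim h1'.2 hbad.2

end Shift

/-- Let `e, e_t ∈ K[t,x]` and `M, M_t` matrices over `K[t,x]`, invertible over `K(t,x)`,
satisfying the compatibility condition `σ_t((1/e)M)·(1/e_t)M_t = σ_x((1/e_t)M_t)·(1/e)M`
(written denominator-free), with gcd of the entries of `M` (resp. `M_t`) together with `e`
(resp. `e_t`) equal to `1`.  If `p` is an irreducible factor of `e·det M` with
`deg_t(p) ≠ 0`, then `σ_t^i σ_x^j(p) ∣ e_t·det M_t` for some `i > 0`, `j ∈ ℤ`. -/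
theorem compat_transport_t (K : Type*) [Field K] [CharZero K] (r : ℕ)
    (e et : MvPolynomial (Fin 2) K) (he : e ≠ 0) (het : et ≠ 0)
    (M Mt : Matrix (Fin r) (Fin r) (MvPolynomial (Fin 2) K))
    (hM : M.det ≠ 0) (hMt : Mt.det ≠ 0)
    (hcompat : (shift2 K 0 1 et * e) • ((M.map (shift2 K 1 0)) * Mt)
             = (shift2 K 1 0 e * et) • ((Mt.map (shift2 K 0 1)) * M))
    (hgcdM : ∀ q : MvPolynomial (Fin 2) K, Irreducible q → q ∣ e → ¬ ∀ i j, q ∣ M i j)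
    (hgcdMt : ∀ q : MvPolynomial (Fin 2) K, Irreducible q → q ∣ et → ¬ ∀ i j, q ∣ Mt i j)
    (p : MvPolynomial (Fin 2) K) (hp : Irreducible p)
    (hpdvd : p ∣ e * M.det) (hpt : degreeOf 0 p ≠ 0) :
    ∃ (i j : ℤ), 0 < i ∧ shift2 K i j p ∣ et * Mt.det := by
  by_contra! hcon
  have hall : ∀ n : ℕ, shift2 K n 0 p ∣ e * M.det := by
    intro n
    induction n with
    | zero => simpa [shift2_zero] using hpdvd
    | succ n ih =>
      have hstep := bad_shift_of_good hcompat hgcdM (shift2_irreducible hp) ih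
      simp only [shift2_shift2] at hstep
      have h := hstep (hcon _ _ (by lia)) (hcon _ _ (by lia))
      simpa [add_comm] using h
  obtain ⟨n, hn⟩ := exists_shift_not_dvd hpt (mul_ne_zero he hM)
  exact hn (hall n)
end
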